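/- Let A₂ ⊂ ℝ² be the triangular lattice generated by (1,0) and (1/2,√3/2). For any α > 0, any vector u ∈ ℝ² and any Bravais lattice Λ = Mℤ² ⊂ ℝ² with |det M| = √3/2 (the covolume of A₂), one has θ_{A₂+u}(α) ≤ θ_Λ(α), with equality if and only if u ∈ A₂ and Λ = R·A₂ for some rotation R ∈ SO(2). -/

import Mathlib

/-!
The theta function of a planar lattice is that of the Gram form `a x² + b x y + c y²` of a basis,
whose discriminant is `-3` when the covolume is `√3 / 2`; the lattice `A₂` has the hexagonal form
`x² + x y + y²`.

Poisson summation turns a translation of the lattice into cosine weights on the dual lattice. The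
sum is largest exactly when all the cosines are equal to one, that is when the translation belongs
to the lattice. It remains to compare the theta series without translation (Montgomery's theorem).

Without translation, Poisson summation is a functional equation exchanging `α` and `4 / (3 α)`, so
one may suppose that `t = π α` is at least `18 / 5`, and by Gauss reduction that `0 ≤ b ≤ a ≤ c`.

* If `2 a + 2 c - b ≤ 18 / 5`, average the theta series over the automorphism
  `(x, y) ↦ (-x - y, x)` of order three of the hexagonal form. The comparison then holds term by
  term: the values `A`, `B`, `C` of the form on an orbit, divided by the value of the hexagonal
  form, satisfy `A + B + C = 2 a + 2 c - b` and `(A + B + C)² - 2 (A² + B² + C²) = 3`, which bounds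
  `exp (-τ A) + exp (-τ B) + exp (-τ C)` below by `3 exp (-τ)` for `τ ≥ 18 / 5`.
* Otherwise the lattice has a short vector: `a ≤ 33 / 50`, and the three terms `1 + 2 exp (-t a)`
  already exceed an upper bound of the hexagonal theta series.

In the case of equality the form is equivalent to the hexagonal one, so the lattice is the image of
`A₂` under an orthogonal map, which can be taken to be a rotation because `A₂` has a reflection
symmetry.
-/

open scoped BigOperators

/-- The translated lattice theta function
`θ_{MZ^d + u}(α) = Σ_{k∈ℤ^d} exp(−πα|Mk+u|²)`. -/
noncomputable def latTheta (d : ℕ) (M : Matrix (Fin d) (Fin d) ℝ)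
    (u : Fin d → ℝ) (α : ℝ) : ℝ :=
  ∑' k : Fin d → ℤ,
    Real.exp (-Real.pi * α * ∑ i, (M.mulVec (fun j => (k j : ℝ)) i + u i) ^ 2)

/-- Generator matrix of the triangular lattice `A₂`, with columns `(1,0)` and `(1/2,√3/2)`. -/
noncomputable def A2mat : Matrix (Fin 2) (Fin 2) ℝ :=
  !![1, 1 / 2; 0, Real.sqrt 3 / 2]

/-! ### Lower bounds for sums of exponentials -/

section Exp

open Finset Nat

lemma hasDerivAt_sum_range_pow_div_factorial (n : ℕ) (x : ℝ) :
    HasDerivAt (fun y : ℝ => ∑ i ∈ range (n + 1), y ^ i / i !) (∑ i ∈ range n, x ^ i / i !) x := by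
  have hterm (i : ℕ) : HasDerivAt (fun y : ℝ => y ^ (i + 1) / (i + 1)!) (x ^ i / i !) x := by
    refine ((hasDerivAt_pow (i + 1) x).div_const _).congr_deriv ?_
    rw [factorial_succ]
    push_cast
    have := i.factorial_ne_zero
    field_simp
  simp only [sum_range_succ', pow_zero]
  exact (HasDerivAt.fun_sum fun i _ => hterm i).add_const _

lemma sum_range_pow_div_factorial_le_exp_of_even {n : ℕ} (hn : Even n) (x : ℝ) :
    ∑ i ∈ range n, x ^ i / i ! ≤ Real.exp x := by
  rcases le_total 0 x with hx | hx
  · exact Real.sum_le_exp_of_nonneg hx n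
  rcases n with _ | m
  · simpa using (Real.exp_pos x).le
  have hm : Odd m := by simpa [parity_simps] using hn
  -- The Taylor polynomial times `exp (-y)` is increasing on `y ≤ 0`, with value `1` at `0`.
  let g : ℝ → ℝ := fun y => (∑ i ∈ range (m + 1), y ^ i / i !) * Real.exp (-y)
  have hg (y : ℝ) : HasDerivAt g (-(y ^ m / m !) * Real.exp (-y)) y := by
    refine ((hasDerivAt_sum_range_pow_div_factorial m y).mul (hasDerivAt_neg y).exp).congr_deriv ?_
    rw [sum_range_succ]
    ring
  have hmono : MonotoneOn g (Set.Iic 0) := by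
    refine monotoneOn_of_deriv_nonneg (convex_Iic 0)
      (fun y _ => (hg y).continuousAt.continuousWithinAt)
      (fun y _ => (hg y).differentiableAt.differentiableWithinAt) fun y hy => ?_
    rw [interior_Iic] at hy
    rw [(hg y).deriv]
    have : y ^ m / m ! ≤ 0 := div_nonpos_of_nonpos_of_nonneg (hm.pow_nonpos hy.le) (by positivity)
    exact mul_nonneg (by linarith) (Real.exp_pos _).le
  have hle : g x ≤ g 0 := hmono hx Set.self_mem_Iic hx
  have hg0 : g 0 = 1 := by simp [g, sum_range_succ']
  simp only [hg0, g] at hle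
  rwa [Real.exp_neg, ← div_eq_mul_inv, div_le_one (Real.exp_pos x)] at hle

/-- With `e₂ = -3 S` and `e₃ = p q r`, nonnegativity of the discriminant `-4 e₂³ - 27 e₃²` of
`(T - p) (T - q) (T - r)` says `e₃² ≤ 4 S³`. -/
lemma neg_mul_add_one_le_mul_mul {p q r S : ℝ} (hsum : p + q + r = 0)
    (hsq : p ^ 2 + q ^ 2 + r ^ 2 = 6 * S) : -(S * (S + 1)) ≤ p * q * r := by
  obtain rfl : r = -p - q := by linarith
  have hS : S = (p ^ 2 + p * q + q ^ 2) / 3 := by linarith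
  have hS0 : 0 ≤ S := by nlinarith [sq_nonneg p, sq_nonneg q, sq_nonneg (-p - q)]
  refine (abs_le_of_sq_le_sq' ?_ (by positivity)).1
  calc (p * q * (-p - q)) ^ 2
      ≤ 4 * S ^ 3 := by
        rw [hS]
        linarith [sq_nonneg ((p - q) * (2 * p + q) * (p + 2 * q))]
    _ ≤ (S * (S + 1)) ^ 2 := by linarith [sq_nonneg (S * (S - 1))]

/-- The power sums of `p, q, r` up to order five are polynomials in `S` and `e₃ = p q r`, so the
quintic Taylor bound becomes `3 + 3 S + 3 S² / 4 + e₃ (1 / 2 + S / 8)`, which increases with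
`e₃`. -/
lemma le_exp_add_exp_add_exp {p q r S : ℝ} (hsum : p + q + r = 0)
    (hsq : p ^ 2 + q ^ 2 + r ^ 2 = 6 * S) :
    3 + 5 / 2 * S + S ^ 2 / 8 - S ^ 3 / 8 ≤ Real.exp p + Real.exp q + Real.exp r := by
  have htaylor (x : ℝ) :
      1 + x + x ^ 2 / 2 + x ^ 3 / 6 + x ^ 4 / 24 + x ^ 5 / 120 ≤ Real.exp x := by
    simpa [sum_range_succ, factorial] using
      sum_range_pow_div_factorial_le_exp_of_even (n := 6) (by decide) x
  have he₃ := neg_mul_add_one_le_mul_mul hsum hsq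
  have hS0 : 0 ≤ S := by nlinarith [sq_nonneg p, sq_nonneg q, sq_nonneg r]
  have h₃ : p ^ 3 + q ^ 3 + r ^ 3 = 3 * (p * q * r) := by
    obtain rfl : r = -p - q := by linarith
    ring
  have h₄ : p ^ 4 + q ^ 4 + r ^ 4 = 18 * S ^ 2 := by
    obtain rfl : r = -p - q := by linarith
    obtain rfl : S = (p ^ 2 + p * q + q ^ 2) / 3 := by linarith
    ring
  have h₅ : p ^ 5 + q ^ 5 + r ^ 5 = 15 * S * (p * q * r) := by
    obtain rfl : r = -p - q := by linarith
    obtain rfl : S = (p ^ 2 + p * q + q ^ 2) / 3 := by linarith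
    ring
  linarith [htaylor p, htaylor q, htaylor r,
    mul_le_mul_of_nonneg_left he₃ (by positivity : 0 ≤ 1 / 2 + S / 8)]

lemma three_mul_exp_lt_of_four_mul_eq {y S : ℝ} (hy₀ : 0 < y) (hy₁ : y ≤ 18 / 25)
    (hS : 4 * S = y ^ 2 + 36 / 5 * y) :
    3 * Real.exp y < 3 + 5 / 2 * S + S ^ 2 / 8 - S ^ 3 / 8 := by
  have hexp : Real.exp y ≤ 1 + y + y ^ 2 / 2 + y ^ 3 / 6 + y ^ 4 * (5 / 96) := by
    have := Real.exp_bound' hy₀.le (by linarith) (n := 4) (by norm_num)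
    norm_num [sum_range_succ, factorial] at this
    linarith
  obtain rfl : S = (y ^ 2 + 36 / 5 * y) / 4 := by linarith
  nlinarith [pow_pos hy₀ 2, pow_pos hy₀ 3, pow_pos hy₀ 4,
    mul_nonneg hy₀.le (sub_nonneg.2 hy₁), mul_nonneg (pow_pos hy₀ 2).le (sub_nonneg.2 hy₁),
    mul_nonneg (pow_pos hy₀ 3).le (sub_nonneg.2 hy₁),
    mul_nonneg (pow_pos hy₀ 4).le (sub_nonneg.2 hy₁),
    mul_nonneg (pow_pos hy₀ 5).le (sub_nonneg.2 hy₁)]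

lemma mul_exp_sub_one_le_exp_mul_sub_one {p : ℝ} (hp : 1 ≤ p) (x : ℝ) :
    p * (Real.exp x - 1) ≤ Real.exp (p * x) - 1 := by
  have hbernoulli := one_add_mul_self_le_rpow_one_add
    (show -1 ≤ Real.exp x - 1 by linarith [Real.exp_pos x]) hp
  rw [add_sub_cancel, ← Real.exp_mul, mul_comm x] at hbernoulli
  linarith

/-- Multiplication by `exp (18 / 5 * (κ - 1))`, where `3 κ = A + B + C`, makes the exponents sum to
zero. -/
lemma three_lt_exp_add_exp_add_exp {A B C : ℝ}
    (hquad : (A + B + C) ^ 2 - 2 * (A ^ 2 + B ^ 2 + C ^ 2) = 3)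
    (hlow : 3 < A + B + C) (hup : A + B + C ≤ 18 / 5) :
    3 < Real.exp (18 / 5 * (1 - A)) + Real.exp (18 / 5 * (1 - B)) +
      Real.exp (18 / 5 * (1 - C)) := by
  obtain ⟨κ, hκ⟩ : ∃ κ, A + B + C = 3 * κ := ⟨(A + B + C) / 3, by ring⟩
  have hcentred : 3 * Real.exp (18 / 5 * (κ - 1)) < Real.exp (18 / 5 * (κ - A)) +
      Real.exp (18 / 5 * (κ - B)) + Real.exp (18 / 5 * (κ - C)) :=
    (three_mul_exp_lt_of_four_mul_eq (S := 81 / 25 * (κ ^ 2 - 1))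
      (by linarith) (by linarith) (by ring)).trans_le
      (le_exp_add_exp_add_exp (by linarith) (by
        rw [hκ] at hquad
        linear_combination (324 / 25 * (-2 * κ)) * hκ - 162 / 25 * hquad))
  have hsplit (x : ℝ) : Real.exp (18 / 5 * (κ - x)) =
      Real.exp (18 / 5 * (1 - x)) * Real.exp (18 / 5 * (κ - 1)) := by
    rw [← Real.exp_add]
    ring_nf
  rw [hsplit A, hsplit B, hsplit C, ← add_mul, ← add_mul] at hcentred
  exact lt_of_mul_lt_mul_right hcentred (Real.exp_pos _).le

lemma three_mul_exp_neg_lt {A B C τ : ℝ} (hτ : 18 / 5 ≤ τ)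
    (hquad : (A + B + C) ^ 2 - 2 * (A ^ 2 + B ^ 2 + C ^ 2) = 3)
    (hlow : 3 < A + B + C) (hup : A + B + C ≤ 18 / 5) :
    3 * Real.exp (-τ) < Real.exp (-τ * A) + Real.exp (-τ * B) + Real.exp (-τ * C) := by
  have hthreshold := three_lt_exp_add_exp_add_exp hquad hlow hup
  have hp : 1 ≤ τ / (18 / 5) := by rwa [one_le_div (by norm_num)]
  have hbernoulli (x : ℝ) :
      τ / (18 / 5) * (Real.exp (18 / 5 * (1 - x)) - 1) ≤ Real.exp (τ * (1 - x)) - 1 := by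
    convert mul_exp_sub_one_le_exp_mul_sub_one hp (18 / 5 * (1 - x)) using 3
    ring
  have hτ_sum : 3 < Real.exp (τ * (1 - A)) + Real.exp (τ * (1 - B)) + Real.exp (τ * (1 - C)) := by
    nlinarith [hbernoulli A, hbernoulli B, hbernoulli C]
  have hsplit (x : ℝ) : Real.exp (-τ * x) = Real.exp (τ * (1 - x)) * Real.exp (-τ) := by
    rw [← Real.exp_add]
    ring_nf
  rw [hsplit A, hsplit B, hsplit C, ← add_mul, ← add_mul]
  exact mul_lt_mul_of_pos_right hτ_sum (Real.exp_pos _)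

end Exp

/-! ### Binary quadratic forms and Gauss reduction -/

/-- The real binary quadratic form `a x² + b x y + c y²`, encoded by its coefficients. -/
@[ext]
structure BinaryForm where
  a : ℝ
  b : ℝ
  c : ℝ

namespace BinaryForm

open Matrix

/-- The value `Q(x, y)` of a binary form. -/
def eval (Q : BinaryForm) (x y : ℝ) : ℝ :=
  Q.a * x ^ 2 + Q.b * x * y + Q.c * y ^ 2

/-- The discriminant `b² - 4 a c`, equal to `-3` for the form of a lattice of the covolume of
`A₂`. -/
def discr (Q : BinaryForm) : ℝ :=
  Q.b ^ 2 - 4 * Q.a * Q.c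

/-- Positive definiteness, in terms of the coefficients. -/
structure PosDef (Q : BinaryForm) : Prop where
  a_pos : 0 < Q.a
  discr_neg : Q.discr < 0

/-- The substitution `(Q ∘ P)(v) = Q(P v)`. -/
def comp (Q : BinaryForm) (P : Matrix (Fin 2) (Fin 2) ℝ) : BinaryForm where
  a := Q.eval (P 0 0) (P 1 0)
  b := 2 * Q.a * P 0 0 * P 0 1 + Q.b * (P 0 0 * P 1 1 + P 0 1 * P 1 0) + 2 * Q.c * P 1 0 * P 1 1
  c := Q.eval (P 0 1) (P 1 1)

/-- Integral equivalence of forms, by substitutions in `GL₂(ℤ)` and not only in `SL₂(ℤ)`. -/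
def Equivalent (Q Q' : BinaryForm) : Prop :=
  ∃ P : Matrix (Fin 2) (Fin 2) ℤ, IsUnit P.det ∧ Q.comp (P.map (↑)) = Q'

/-- Reduced forms in the sense of Gauss. The condition `0 ≤ b` is a normalization available under
`GL₂(ℤ)`-equivalence. -/
structure IsReduced (Q : BinaryForm) : Prop where
  b_nonneg : 0 ≤ Q.b
  b_le_a : Q.b ≤ Q.a
  a_le_c : Q.a ≤ Q.c

variable {Q Q' Q'' : BinaryForm}

lemma ext_eval (h : ∀ x y, Q.eval x y = Q'.eval x y) : Q = Q' := by
  have h₁ := h 1 0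
  have h₂ := h 0 1
  have h₃ := h 1 1
  simp only [eval] at h₁ h₂ h₃
  ext <;> linarith

@[simp]
lemma eval_comp (Q : BinaryForm) (P : Matrix (Fin 2) (Fin 2) ℝ) (x y : ℝ) :
    (Q.comp P).eval x y = Q.eval (P 0 0 * x + P 0 1 * y) (P 1 0 * x + P 1 1 * y) := by
  simp only [eval, comp]
  ring

lemma comp_comp (Q : BinaryForm) (P P' : Matrix (Fin 2) (Fin 2) ℝ) :
    (Q.comp P).comp P' = Q.comp (P * P') := by
  refine ext_eval fun x y => ?_
  simp only [eval_comp, mul_apply, Fin.sum_univ_two]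
  congr 1 <;> ring

lemma discr_comp (Q : BinaryForm) (P : Matrix (Fin 2) (Fin 2) ℝ) :
    (Q.comp P).discr = P.det ^ 2 * Q.discr := by
  simp only [discr, comp, eval, det_fin_two]
  ring

lemma PosDef.c_pos (hQ : Q.PosDef) : 0 < Q.c := by
  have := hQ.discr_neg
  rw [discr] at this
  exact pos_of_mul_pos_right (by nlinarith [sq_nonneg Q.b] : 0 < Q.a * Q.c) hQ.a_pos.le

/-- The smallest eigenvalue of a positive form is at least the determinant divided by the trace. -/
lemma neg_discr_mul_add_sq_le_mul_eval (Q : BinaryForm) (x y : ℝ) :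
    -Q.discr / 4 * (x ^ 2 + y ^ 2) ≤ (Q.a + Q.c) * Q.eval x y := by
  simp only [discr, eval]
  linarith [sq_nonneg (Q.a * x + Q.b * y / 2), sq_nonneg (Q.b * x / 2 + Q.c * y)]

lemma PosDef.eval_pos (hQ : Q.PosDef) {x y : ℝ} (hxy : 0 < x ^ 2 + y ^ 2) : 0 < Q.eval x y := by
  have hle := neg_discr_mul_add_sq_le_mul_eval Q x y
  have hpos := mul_pos (by linarith [hQ.discr_neg] : 0 < -Q.discr / 4) hxy
  exact pos_of_mul_pos_right (hpos.trans_le hle) (add_pos hQ.a_pos hQ.c_pos).le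

lemma PosDef.comp (hQ : Q.PosDef) {P : Matrix (Fin 2) (Fin 2) ℝ} (hP : P.det ≠ 0) :
    (Q.comp P).PosDef where
  a_pos := hQ.eval_pos <| by
    refine (by positivity : 0 ≤ P 0 0 ^ 2 + P 1 0 ^ 2).lt_of_ne' fun h => hP ?_
    have h₀ : P 0 0 = 0 := by nlinarith [sq_nonneg (P 1 0)]
    have h₁ : P 1 0 = 0 := by nlinarith [sq_nonneg (P 0 0)]
    rw [det_fin_two, h₀, h₁]
    ring
  discr_neg := by
    rw [discr_comp]
    exact mul_neg_of_pos_of_neg (by positivity) hQ.discr_neg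

lemma det_map_intCast_eq_one_or {P : Matrix (Fin 2) (Fin 2) ℤ} (hP : IsUnit P.det) :
    (P.map ((↑) : ℤ → ℝ)).det = 1 ∨ (P.map ((↑) : ℤ → ℝ)).det = -1 := by
  rw [← Int.cast_det]
  exact_mod_cast Int.isUnit_iff.1 hP

lemma Equivalent.trans (h : Q.Equivalent Q') (h' : Q'.Equivalent Q'') : Q.Equivalent Q'' := by
  obtain ⟨P, hP, rfl⟩ := h
  obtain ⟨P', hP', rfl⟩ := h'
  refine ⟨P * P', det_mul P P' ▸ hP.mul hP', ?_⟩
  rw [comp_comp]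
  exact congrArg Q.comp (Matrix.map_mul (f := Int.castRingHom ℝ))

lemma Equivalent.discr_eq (h : Q.Equivalent Q') : Q'.discr = Q.discr := by
  obtain ⟨P, hP, rfl⟩ := h
  rcases det_map_intCast_eq_one_or hP with hdet | hdet <;> simp [discr_comp, hdet]

lemma Equivalent.posDef (h : Q.Equivalent Q') (hQ : Q.PosDef) : Q'.PosDef := by
  obtain ⟨P, hP, rfl⟩ := h
  refine hQ.comp ?_
  rcases det_map_intCast_eq_one_or hP with hdet | hdet <;> norm_num [hdet]

/-- The form `(x, y) ↦ a |x + y z|²`. -/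
def ofPoint (a : ℝ) (z : ℂ) : BinaryForm :=
  ⟨a, 2 * a * z.re, a * Complex.normSq z⟩

lemma eval_ofPoint (a : ℝ) (z : ℂ) (x y : ℝ) :
    (ofPoint a z).eval x y = a * Complex.normSq (x + y * z) := by
  simp [eval, ofPoint, Complex.normSq_apply]
  ring

lemma ofPoint_comp (a : ℝ) (z : ℂ) (p q r s : ℝ) (hden : (r * z + s : ℂ) ≠ 0) :
    (ofPoint a z).comp !![s, q; r, p] =
      ofPoint (a * Complex.normSq (r * z + s)) ((p * z + q) / (r * z + s)) := by
  refine ext_eval fun x y => ?_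
  simp only [eval_comp, eval_ofPoint, mul_assoc, ← Complex.normSq_mul]
  congr 2
  simp
  field_simp
  ring

lemma PosDef.exists_eq_ofPoint (hQ : Q.PosDef) : ∃ z : UpperHalfPlane, Q = ofPoint Q.a z := by
  have ha := hQ.a_pos
  have hsqrt : √(-Q.discr) ^ 2 = 4 * Q.a * Q.c - Q.b ^ 2 := by
    rw [Real.sq_sqrt (neg_nonneg.2 hQ.discr_neg.le), discr]
    ring
  refine ⟨⟨⟨Q.b / (2 * Q.a), √(-Q.discr) / (2 * Q.a)⟩, div_pos
    (Real.sqrt_pos.2 (neg_pos.2 hQ.discr_neg)) (by positivity)⟩, ?_⟩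
  ext
  · rfl
  · simp only [ofPoint]
    field_simp
  · simp only [ofPoint, Complex.normSq_apply]
    field_simp
    linear_combination -hsqrt

/-- The point of the upper half-plane attached to the form is moved to the fundamental domain of the
modular group, which is the reduction condition up to the sign of `b`. -/
lemma PosDef.exists_equivalent_abs_b_le (hQ : Q.PosDef) :
    ∃ Q', Q.Equivalent Q' ∧ |Q'.b| ≤ Q'.a ∧ Q'.a ≤ Q'.c := by
  obtain ⟨z, hz⟩ := hQ.exists_eq_ofPoint
  obtain ⟨g, hnormSq, hre⟩ := ModularGroup.exists_smul_mem_fd z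
  have hden : ((g 1 0 : ℤ) * z + (g 1 1 : ℤ) : ℂ) ≠ 0 := by
    simpa [UpperHalfPlane.denom, -UpperHalfPlane.denom_ne_zero] using
      UpperHalfPlane.denom_ne_zero g z
  let P : Matrix (Fin 2) (Fin 2) ℤ := !![g 1 1, g 0 1; g 1 0, g 0 0]
  have hP : IsUnit P.det := by
    rw [det_fin_two_of, mul_comm, ← det_fin_two, g.det_coe]
    exact isUnit_one
  have hcomp : Q.comp (P.map (↑)) =
      ofPoint (Q.a * Complex.normSq ((g 1 0 : ℤ) * z + (g 1 1 : ℤ))) ↑(g • z) := by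
    have hmap : P.map ((↑) : ℤ → ℝ) = !![(g 1 1 : ℝ), g 0 1; g 1 0, g 0 0] := by
      ext i j
      fin_cases i <;> fin_cases j <;> rfl
    rw [hmap, hz, ofPoint_comp _ _ _ _ _ _ (by exact_mod_cast hden),
      UpperHalfPlane.coe_specialLinearGroup_apply]
    simp [ofPoint]
  set A := Q.a * Complex.normSq ((g 1 0 : ℤ) * z + (g 1 1 : ℤ))
  have hA : 0 < A := mul_pos hQ.a_pos (Complex.normSq_pos.2 hden)
  refine ⟨_, ⟨P, hP, hcomp⟩, ?_, le_mul_of_one_le_right hA.le hnormSq⟩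
  rw [← UpperHalfPlane.coe_re] at hre
  simp only [ofPoint, abs_mul, abs_of_pos hA, abs_two]
  nlinarith

lemma PosDef.exists_equivalent_isReduced (hQ : Q.PosDef) :
    ∃ Q', Q.Equivalent Q' ∧ Q'.IsReduced := by
  obtain ⟨Q', hequiv, hb, hac⟩ := hQ.exists_equivalent_abs_b_le
  rcases le_total 0 Q'.b with hb₀ | hb₀
  · exact ⟨Q', hequiv, hb₀, (le_abs_self _).trans hb, hac⟩
  · have hflip : Q'.Equivalent ⟨Q'.a, -Q'.b, Q'.c⟩ :=
      ⟨!![1, 0; 0, -1], by simp [det_fin_two_of], by ext <;> simp [BinaryForm.comp, eval]⟩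
    exact ⟨_, hequiv.trans hflip, neg_nonneg.2 hb₀, (neg_le_abs _).trans hb, hac⟩

end BinaryForm

/-! ### Theta series of a form -/

lemma hasSum_pow_natAbs {𝕜 : Type*} [NormedField 𝕜] {q : 𝕜} (hq : ‖q‖ < 1) :
    HasSum (fun n : ℤ => q ^ n.natAbs) ((1 + q) / (1 - q)) := by
  have hgeom := hasSum_geometric_of_norm_lt_one hq
  have hgeom_succ : HasSum (fun n : ℕ => q ^ (n + 1)) (q * (1 - q)⁻¹) := by
    simpa [pow_succ'] using hgeom.mul_left q
  convert HasSum.of_nat_of_neg_add_one (f := fun n : ℤ => q ^ n.natAbs) (by simpa using hgeom)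
    hgeom_succ using 1
  rw [div_eq_mul_inv, add_mul, one_mul]

lemma summable_exp_neg_mul_add_sq {μ : ℝ} (hμ : 0 < μ) (x : ℝ) :
    Summable fun n : ℤ => Real.exp (-μ * (n + x) ^ 2) := by
  have hjacobi := ((summable_jacobiTheta₂_term_iff (↑(μ * x / Real.pi) * Complex.I)
    (↑(μ / Real.pi) * Complex.I)).2 (by simpa using by positivity)).norm.mul_left
    (Real.exp (-μ * x ^ 2))
  refine hjacobi.congr fun n => ?_
  rw [norm_jacobiTheta₂_term, ← Real.exp_add, Complex.im_ofReal_mul, Complex.im_ofReal_mul,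
    Complex.I_im]
  congr 1
  field_simp
  ring

namespace BinaryForm

open Matrix

variable {Q Q' : BinaryForm} {t : ℝ}

/-- The theta series `∑ exp (-t Q(v + w))`, over `v ∈ ℤ²`, of a form translated by `w = (x, y)`. -/
noncomputable def shiftedTheta (Q : BinaryForm) (x y t : ℝ) : ℝ :=
  ∑' k : ℤ × ℤ, Real.exp (-t * Q.eval (k.1 + x) (k.2 + y))

/-- The theta series `∑ exp (-t Q(v))`, over `v ∈ ℤ²`, of a form. -/
noncomputable def theta (Q : BinaryForm) (t : ℝ) : ℝ :=
  ∑' k : ℤ × ℤ, Real.exp (-t * Q.eval k.1 k.2)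

lemma shiftedTheta_zero (Q : BinaryForm) (t : ℝ) : Q.shiftedTheta 0 0 t = Q.theta t := by
  simp only [shiftedTheta, theta, add_zero]

lemma PosDef.summable_shiftedTheta (hQ : Q.PosDef) (ht : 0 < t) (x y : ℝ) :
    Summable fun k : ℤ × ℤ => Real.exp (-t * Q.eval (k.1 + x) (k.2 + y)) := by
  have htrace := add_pos hQ.a_pos hQ.c_pos
  obtain ⟨μ, hμ, hle⟩ : ∃ μ > 0, ∀ x y, μ * (x ^ 2 + y ^ 2) ≤ Q.eval x y := by
    refine ⟨-Q.discr / 4 / (Q.a + Q.c), div_pos (by linarith [hQ.discr_neg]) htrace, fun x y => ?_⟩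
    rw [div_mul_eq_mul_div, div_le_iff₀' htrace]
    exact neg_discr_mul_add_sq_le_mul_eval Q x y
  have hprod := (summable_exp_neg_mul_add_sq (mul_pos ht hμ) x).mul_of_nonneg
    (summable_exp_neg_mul_add_sq (mul_pos ht hμ) y) (fun _ => (Real.exp_pos _).le)
    (fun _ => (Real.exp_pos _).le)
  refine hprod.of_nonneg_of_le (fun _ => (Real.exp_pos _).le) fun k => ?_
  rw [← Real.exp_add, Real.exp_le_exp]
  linarith [mul_le_mul_of_nonneg_left (hle (k.1 + x) (k.2 + y)) ht.le]

lemma PosDef.summable_theta (hQ : Q.PosDef) (ht : 0 < t) :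
    Summable fun k : ℤ × ℤ => Real.exp (-t * Q.eval k.1 k.2) := by
  simpa only [add_zero] using hQ.summable_shiftedTheta ht 0 0

lemma Equivalent.theta_eq (h : Q.Equivalent Q') (t : ℝ) : Q'.theta t = Q.theta t := by
  obtain ⟨P, hP, rfl⟩ := h
  let e : ℤ × ℤ ≃ ℤ × ℤ := (finTwoArrowEquiv ℤ).symm.trans <|
    (P.toLinearEquiv' (P.invertibleOfIsUnitDet hP)).toEquiv.trans (finTwoArrowEquiv ℤ)
  refine (tsum_congr fun k => ?_).trans (e.tsum_eq _)
  have he (v : Fin 2 → ℤ) : P.toLinearEquiv' (P.invertibleOfIsUnitDet hP) v = P *ᵥ v := rfl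
  simp [e, he]

end BinaryForm

/-! ### The hexagonal form -/

namespace BinaryForm

open Matrix

variable {Q : BinaryForm} {t : ℝ}

/-- The form `x² + x y + y²` of the lattice `A₂`. -/
def hex : BinaryForm := ⟨1, 1, 1⟩

lemma eval_hex (x y : ℝ) : hex.eval x y = x ^ 2 + x * y + y ^ 2 := by
  simp only [eval, hex, one_mul]

lemma discr_hex : hex.discr = -3 := by
  norm_num [discr, hex]

lemma posDef_hex : hex.PosDef where
  a_pos := one_pos
  discr_neg := by norm_num [discr_hex]

lemma one_le_eval_hex {k : ℤ × ℤ} (hk : k ≠ 0) : 1 ≤ hex.eval k.1 k.2 := by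
  have hpos : 0 < hex.eval k.1 k.2 := posDef_hex.eval_pos <| by
    have : k.1 ≠ 0 ∨ k.2 ≠ 0 := by
      contrapose! hk
      exact Prod.ext hk.1 hk.2
    rcases this with h | h <;> positivity
  rw [eval_hex] at hpos ⊢
  exact_mod_cast hpos

/-- The sum of the values of `Q` at `(1, 0)`, `(-1, 1)`, `(0, -1)`: the orbit of `(1, 0)` under
`(x, y) ↦ (-x - y, x)`, an automorphism of order three of the hexagonal form. -/
def orbitSum (Q : BinaryForm) : ℝ :=
  2 * Q.a + 2 * Q.c - Q.b

lemma PosDef.three_lt_orbitSum (hQ : Q.PosDef) (hdiscr : Q.discr = -3) (hne : Q ≠ hex) :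
    3 < Q.orbitSum := by
  have hpos : 0 < Q.orbitSum := by
    have := hQ.eval_pos (x := 1) (y := -1) (by norm_num)
    simp only [eval, orbitSum] at *
    linarith [hQ.a_pos, hQ.c_pos]
  have hsq : Q.orbitSum ^ 2 - 9 = 3 * (Q.a - Q.c) ^ 2 + (Q.a + Q.c - 2 * Q.b) ^ 2 := by
    simp only [discr, orbitSum] at *
    linear_combination -3 * hdiscr
  by_contra! hle
  have hac : Q.a = Q.c := by nlinarith [sq_nonneg (Q.a - Q.c), sq_nonneg (Q.a + Q.c - 2 * Q.b)]
  have hab : Q.a = Q.b := by nlinarith [sq_nonneg (Q.a - Q.c), sq_nonneg (Q.a + Q.c - 2 * Q.b)]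
  have ha : Q.a = 1 := by
    rw [discr, ← hac, ← hab] at hdiscr
    nlinarith [hQ.a_pos]
  exact hne (BinaryForm.ext ha (hab ▸ ha) (hac ▸ ha))

lemma eval_add_eval_add_eval (Q : BinaryForm) (x y : ℝ) :
    Q.eval x y + Q.eval (-x - y) x + Q.eval y (-x - y) = Q.orbitSum * hex.eval x y := by
  simp only [eval, orbitSum, hex]
  ring

lemma sq_sub_two_mul_eval_sq (Q : BinaryForm) (x y : ℝ) :
    (Q.eval x y + Q.eval (-x - y) x + Q.eval y (-x - y)) ^ 2 -
      2 * (Q.eval x y ^ 2 + Q.eval (-x - y) x ^ 2 + Q.eval y (-x - y) ^ 2) =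
      -Q.discr * hex.eval x y ^ 2 := by
  simp only [eval, discr, hex]
  ring

lemma PosDef.hasSum_theta_comp (hQ : Q.PosDef) (ht : 0 < t) {P : Matrix (Fin 2) (Fin 2) ℤ}
    (hP : IsUnit P.det) :
    HasSum (fun k : ℤ × ℤ => Real.exp (-t * (Q.comp (P.map (↑))).eval k.1 k.2)) (Q.theta t) := by
  have hequiv : Q.Equivalent (Q.comp (P.map (↑))) := ⟨P, hP, rfl⟩
  exact hequiv.theta_eq t ▸ ((hequiv.posDef hQ).summable_theta ht).hasSum

lemma PosDef.hasSum_orbit (hQ : Q.PosDef) (ht : 0 < t) :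
    HasSum (fun k : ℤ × ℤ => Real.exp (-t * Q.eval k.1 k.2) +
      Real.exp (-t * Q.eval (-k.1 - k.2) k.1) + Real.exp (-t * Q.eval k.2 (-k.1 - k.2)))
      (3 * Q.theta t) := by
  have hsum := ((hQ.summable_theta ht).hasSum.add
    (hQ.hasSum_theta_comp ht (P := !![-1, -1; 1, 0]) (by simp [det_fin_two_of]))).add
    (hQ.hasSum_theta_comp ht (P := !![0, 1; -1, -1]) (by simp [det_fin_two_of]))
  convert hsum using 1
  · simp [sub_eq_add_neg]
  · rw [theta]
    ring

lemma three_mul_exp_eval_hex_lt (hdiscr : Q.discr = -3) (hlow : 3 < Q.orbitSum)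
    (hup : Q.orbitSum ≤ 18 / 5) (ht : 18 / 5 ≤ t) {x y : ℝ} (hxy : 1 ≤ hex.eval x y) :
    3 * Real.exp (-t * hex.eval x y) < Real.exp (-t * Q.eval x y) +
      Real.exp (-t * Q.eval (-x - y) x) + Real.exp (-t * Q.eval y (-x - y)) := by
  have hquad := sq_sub_two_mul_eval_sq Q x y
  have hsum := eval_add_eval_add_eval Q x y
  set N := hex.eval x y
  have hN : 0 < N := by linarith
  have hmean : Q.eval x y / N + Q.eval (-x - y) x / N + Q.eval y (-x - y) / N = Q.orbitSum := by
    rw [← add_div, ← add_div, hsum, mul_div_cancel_right₀ _ hN.ne']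
  have hlt := three_mul_exp_neg_lt (A := Q.eval x y / N) (B := Q.eval (-x - y) x / N)
    (C := Q.eval y (-x - y) / N) (τ := t * N) (by nlinarith)
    (by
      rw [hdiscr] at hquad
      field_simp
      linarith)
    (hmean.symm ▸ hlow) (hmean.symm ▸ hup)
  have hcancel (z : ℝ) : -(t * N) * (z / N) = -t * z := by field_simp
  rwa [hcancel, hcancel, hcancel, ← neg_mul] at hlt

lemma PosDef.theta_hex_lt_of_orbitSum_le (hQ : Q.PosDef) (hdiscr : Q.discr = -3) (hne : Q ≠ hex)
    (hup : Q.orbitSum ≤ 18 / 5) (ht : 18 / 5 ≤ t) : hex.theta t < Q.theta t := by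
  have ht₀ : 0 < t := by linarith
  have hterm {k : ℤ × ℤ} (hk : k ≠ 0) := three_mul_exp_eval_hex_lt hdiscr
    (hQ.three_lt_orbitSum hdiscr hne) hup ht (one_le_eval_hex hk)
  refine lt_of_mul_lt_mul_left (hasSum_lt (fun k => ?_) (hterm (k := (1, 0)) (by decide))
    ((posDef_hex.summable_theta ht₀).hasSum.mul_left 3) (hQ.hasSum_orbit ht₀)) (by norm_num)
  rcases eq_or_ne k 0 with rfl | hk
  · norm_num [eval]
  · exact (hterm hk).le

lemma PosDef.one_add_two_mul_exp_le_theta (hQ : Q.PosDef) (ht : 0 < t) :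
    1 + 2 * Real.exp (-t * Q.a) ≤ Q.theta t := by
  have hle := (hQ.summable_theta ht).sum_le_tsum ({(0, 0), (1, 0), (-1, 0)} : Finset (ℤ × ℤ))
    fun _ _ => (Real.exp_pos _).le
  rw [Finset.sum_insert (by decide), Finset.sum_pair (by decide)] at hle
  norm_num [eval] at hle
  simp only [theta, eval, neg_mul]
  linarith

lemma natAbs_add_natAbs_le_eval_hex {k : ℤ × ℤ} (hk₁ : k ≠ (1, -1)) (hk₂ : k ≠ (-1, 1)) :
    ((k.1.natAbs + k.2.natAbs : ℕ) : ℝ) ≤ hex.eval k.1 k.2 := by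
  obtain ⟨m, n⟩ := k
  -- For both signs, `2 * (N - m ∓ n)` is a sum of three integral squares up to a constant.
  have hsame (m n : ℤ) : m + n ≤ m ^ 2 + m * n + n ^ 2 := by
    nlinarith [sq_nonneg (m + n - 1), sq_nonneg m, sq_nonneg n]
  have hopposite {m n : ℤ} (h : ¬(m = 1 ∧ n = -1)) : m - n ≤ m ^ 2 + m * n + n ^ 2 := by
    by_contra! hlt
    refine h ⟨?_, ?_⟩ <;> nlinarith [sq_nonneg (m + n), sq_nonneg (m - 1), sq_nonneg (n + 1)]
  rw [eval_hex, Nat.cast_add, Nat.cast_natAbs, Nat.cast_natAbs]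
  norm_cast
  simp only [ne_eq, Prod.mk.injEq] at hk₁ hk₂
  have h₁ := hsame m n
  have h₂ := hsame (-m) (-n)
  have h₃ := hopposite hk₁
  have h₄ := hopposite (m := -m) (n := -n) (by omega)
  rcases abs_cases m with ⟨hm, _⟩ | ⟨hm, _⟩ <;> rcases abs_cases n with ⟨hn, _⟩ | ⟨hn, _⟩ <;>
    rw [hm, hn] <;> linarith

lemma theta_hex_le (ht : 0 < t) :
    hex.theta t ≤ ((1 + Real.exp (-t)) / (1 - Real.exp (-t))) ^ 2 + 2 * Real.exp (-t) := by
  set q := Real.exp (-t)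
  have hq₀ : 0 < q := Real.exp_pos _
  have hgeom : HasSum (fun n : ℤ => q ^ n.natAbs) ((1 + q) / (1 - q)) := hasSum_pow_natAbs <| by
    rw [Real.norm_of_nonneg hq₀.le]
    exact Real.exp_lt_one_iff.2 (by linarith)
  have hprod := hgeom.mul hgeom (hgeom.summable.mul_of_nonneg hgeom.summable
    (fun _ => by positivity) fun _ => by positivity)
  have hexcept := (hasSum_ite_eq ((1, -1) : ℤ × ℤ) q).add (hasSum_ite_eq ((-1, 1) : ℤ × ℤ) q)
  have hterm (k : ℤ × ℤ) : Real.exp (-t * hex.eval k.1 k.2) ≤ q ^ k.1.natAbs * q ^ k.2.natAbs +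
      ((if k = (1, -1) then q else 0) + if k = (-1, 1) then q else 0) := by
    by_cases hk : k = (1, -1) ∨ k = (-1, 1)
    · rcases hk with rfl | rfl <;> simp [eval_hex, q, mul_nonneg, Real.exp_nonneg]
    · push Not at hk
      rw [if_neg hk.1, if_neg hk.2, add_zero, add_zero, ← pow_add, ← Real.exp_nat_mul,
        Real.exp_le_exp]
      linarith [mul_le_mul_of_nonneg_left (natAbs_add_natAbs_le_eval_hex hk.1 hk.2) ht.le]
  calc hex.theta t
      ≤ (1 + q) / (1 - q) * ((1 + q) / (1 - q)) + (q + q) :=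
        hasSum_le hterm (posDef_hex.summable_theta ht).hasSum (hprod.add hexcept)
    _ = ((1 + q) / (1 - q)) ^ 2 + 2 * q := by ring

lemma theta_hex_lt_one_add_mul_exp (ht : 18 / 5 ≤ t) :
    hex.theta t < 1 + 33 / 5 * Real.exp (-t) := by
  refine (theta_hex_le (by linarith)).trans_lt ?_
  have hq₀ : 0 < Real.exp (-t) := Real.exp_pos _
  have hq : Real.exp (-t) ≤ 1 / 33 := by
    have hexp : 33 ≤ Real.exp (18 / 5) := by
      have := Real.sum_le_exp_of_nonneg (x := 18 / 5) (by norm_num) 9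
      norm_num [Finset.sum_range_succ, Nat.factorial] at this
      linarith
    rw [Real.exp_neg, inv_eq_one_div]
    exact one_div_le_one_div_of_le (by norm_num) (hexp.trans (Real.exp_le_exp.2 ht))
  generalize Real.exp (-t) = q at hq₀ hq ⊢
  have hpoly : (1 + q) ^ 2 < (1 + 23 / 5 * q) * (1 - q) ^ 2 := by
    nlinarith [mul_pos hq₀ hq₀, mul_nonneg hq₀.le (sub_nonneg.2 hq)]
  rw [div_pow]
  linarith [(div_lt_iff₀ (by nlinarith : 0 < (1 - q) ^ 2)).2 hpoly]

lemma PosDef.theta_hex_lt_of_a_le (hQ : Q.PosDef) (ha : Q.a ≤ 33 / 50) (ht : 18 / 5 ≤ t) :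
    hex.theta t < Q.theta t := by
  have hshort : 33 / 10 * Real.exp (-t) ≤ Real.exp (-t * Q.a) := by
    have hexp : 33 / 10 ≤ Real.exp (153 / 125) := by
      have := Real.sum_le_exp_of_nonneg (x := 153 / 125) (by norm_num) 6
      norm_num [Finset.sum_range_succ, Nat.factorial] at this
      linarith
    -- `153 / 125 = 18 / 5 * (1 - 33 / 50)`
    calc 33 / 10 * Real.exp (-t) ≤ Real.exp (153 / 125) * Real.exp (-t) := by gcongr
      _ ≤ Real.exp (-t * Q.a) := by
        rw [← Real.exp_add, Real.exp_le_exp]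
        nlinarith
  linarith [theta_hex_lt_one_add_mul_exp ht, hQ.one_add_two_mul_exp_le_theta (by linarith : 0 < t)]

lemma IsReduced.a_le_of_lt_orbitSum (hred : Q.IsReduced) (hQ : Q.PosDef) (hdiscr : Q.discr = -3)
    (hlow : 18 / 5 < Q.orbitSum) : Q.a ≤ 33 / 50 := by
  obtain ⟨hb, hba, hac⟩ := hred
  have ha := hQ.a_pos
  simp only [discr, orbitSum] at hdiscr hlow
  have ha₁ : Q.a ≤ 1 := by nlinarith
  -- As `2 * c = (b ^ 2 + 3) / (2 * a)` and `b ^ 2 / (2 * a) ≤ b`.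
  have hquad : 0 < 4 * Q.a ^ 2 - 36 / 5 * Q.a + 3 := by nlinarith
  by_contra! hlt
  nlinarith [hquad, mul_nonneg (sub_nonneg.2 hlt.le) (sub_nonneg.2 ha₁)]

lemma IsReduced.theta_hex_lt (hred : Q.IsReduced) (hQ : Q.PosDef) (hdiscr : Q.discr = -3)
    (hne : Q ≠ hex) (ht : 18 / 5 ≤ t) : hex.theta t < Q.theta t := by
  rcases le_or_gt Q.orbitSum (18 / 5) with hup | hlow
  · exact hQ.theta_hex_lt_of_orbitSum_le hdiscr hne hup ht
  · exact hQ.theta_hex_lt_of_a_le (hred.a_le_of_lt_orbitSum hQ hdiscr hlow) ht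

end BinaryForm

/-! ### Poisson summation and the functional equation -/

section Gaussian

open Complex

lemma tsum_cexp_neg_pi_mul_add_sq {a : ℝ} (ha : 0 < a) (z ξ : ℝ) :
    ∑' n : ℤ, cexp (-Real.pi * a * (n + z) ^ 2 + 2 * Real.pi * I * ξ * (n + z)) =
      ((√a)⁻¹ : ℝ) * ∑' l : ℤ, cexp (-Real.pi * (l - ξ) ^ 2 / a + 2 * Real.pi * I * l * z) := by
  have ha₀ : (a : ℂ) ≠ 0 := by exact_mod_cast ha.ne'
  have hconst : 1 / (a : ℂ) ^ (1 / 2 : ℂ) = ((√a)⁻¹ : ℝ) := by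
    rw [Real.sqrt_eq_rpow, ofReal_inv, ofReal_cpow ha.le, one_div]
    norm_num
  have hpoisson := Complex.tsum_exp_neg_quadratic (a := a) (by simpa using ha) (-a * z + I * ξ)
  rw [hconst] at hpoisson
  set w : ℂ := cexp (-Real.pi * a * z ^ 2 + 2 * Real.pi * I * ξ * z) with hw
  calc ∑' n : ℤ, cexp (-Real.pi * a * (n + z) ^ 2 + 2 * Real.pi * I * ξ * (n + z))
      = w * ∑' n : ℤ, cexp (-Real.pi * a * n ^ 2 + 2 * Real.pi * (-a * z + I * ξ) * n) := by
        rw [← tsum_mul_left]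
        refine tsum_congr fun n => ?_
        rw [hw, ← Complex.exp_add]
        ring_nf
    _ = ((√a)⁻¹ : ℝ) *
          ∑' l : ℤ, cexp (-Real.pi * (l - ξ) ^ 2 / a + 2 * Real.pi * I * l * z) := by
        rw [hpoisson, mul_left_comm, ← tsum_mul_left]
        refine congrArg _ (tsum_congr fun n => ?_)
        rw [hw, ← Complex.exp_add]
        congr 1
        field_simp
        ring_nf
        simp only [I_sq, I_pow_three, I_pow_four]
        ring

end Gaussian

namespace BinaryForm

open Complex Matrix

variable {Q : BinaryForm} {t : ℝ}

/-- Multiplication of the coefficients by a real number. -/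
instance : SMul ℝ BinaryForm where
  smul s Q := ⟨s * Q.a, s * Q.b, s * Q.c⟩

lemma smul_def (s : ℝ) (Q : BinaryForm) : s • Q = ⟨s * Q.a, s * Q.b, s * Q.c⟩ := rfl

lemma eval_smul (s : ℝ) (Q : BinaryForm) (x y : ℝ) : (s • Q).eval x y = s * Q.eval x y := by
  simp only [eval, smul_def]
  ring

lemma discr_smul (s : ℝ) (Q : BinaryForm) : (s • Q).discr = s ^ 2 * Q.discr := by
  simp only [discr, smul_def]
  ring

lemma PosDef.smul (hQ : Q.PosDef) {s : ℝ} (hs : 0 < s) : (s • Q).PosDef where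
  a_pos := mul_pos hs hQ.a_pos
  discr_neg := discr_smul s Q ▸ mul_neg_of_pos_of_neg (by positivity) hQ.discr_neg

lemma shiftedTheta_smul (s : ℝ) (Q : BinaryForm) (x y t : ℝ) :
    (s • Q).shiftedTheta x y t = Q.shiftedTheta x y (s * t) := by
  simp only [shiftedTheta, eval_smul]
  refine tsum_congr fun k => ?_
  ring_nf

lemma theta_smul (s : ℝ) (Q : BinaryForm) (t : ℝ) : (s • Q).theta t = Q.theta (s * t) := by
  simp only [← shiftedTheta_zero, shiftedTheta_smul]

/-- The form of the dual lattice: if `Q(v) = vᵀ G v` then `Q.dual(v) = vᵀ G⁻¹ v`. -/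
noncomputable def dual (Q : BinaryForm) : BinaryForm :=
  (4 / -Q.discr) • ⟨Q.c, -Q.b, Q.a⟩

lemma smul_equivalent_dual (Q : BinaryForm) : ((4 / -Q.discr) • Q).Equivalent Q.dual :=
  ⟨!![0, -1; 1, 0], by simp [det_fin_two_of], by
    ext <;> simp [BinaryForm.comp, eval, dual, smul_def]⟩

lemma PosDef.dual (hQ : Q.PosDef) : Q.dual.PosDef :=
  Q.smul_equivalent_dual.posDef (hQ.smul (div_pos four_pos (neg_pos.2 hQ.discr_neg)))

/-- The summand of the theta series of `Q` at `t = π` after Poisson summation in the second variable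
only, up to the factor `√c`. -/
noncomputable def partialDualTerm (Q : BinaryForm) (x y : ℝ) (k : ℤ × ℤ) : ℂ :=
  cexp (-Real.pi * (-Q.discr / (4 * Q.c) : ℝ) * (k.1 + x) ^ 2 +
    (-Real.pi * k.2 ^ 2 / Q.c + 2 * Real.pi * I * k.2 * (y + Q.b / (2 * Q.c) * (k.1 + x))))

/-- The summand of the theta series of `Q` at `t = π` after Poisson summation in both variables, up
to the factor `√(-discr) / 2`. -/
noncomputable def dualTerm (Q : BinaryForm) (x y : ℝ) (k : ℤ × ℤ) : ℂ :=
  cexp ((-Real.pi * Q.dual.eval k.1 k.2 : ℝ) + (2 * Real.pi * (k.1 * x + k.2 * y) : ℝ) * I)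

lemma PosDef.summable_partialDualTerm (hQ : Q.PosDef) (x y : ℝ) :
    Summable (Q.partialDualTerm x y) := by
  have hc := hQ.c_pos
  have hD := neg_pos.2 hQ.discr_neg
  rw [← summable_norm_iff]
  have hprod := (summable_exp_neg_mul_add_sq (by positivity :
    0 < Real.pi * (-Q.discr / (4 * Q.c))) x).mul_of_nonneg
    (summable_exp_neg_mul_add_sq (by positivity : 0 < Real.pi / Q.c) 0)
    (fun _ => (Real.exp_pos _).le) fun _ => (Real.exp_pos _).le
  refine hprod.congr fun k => ?_
  have hsplit : (-Real.pi * (-Q.discr / (4 * Q.c) : ℝ) * (k.1 + x) ^ 2 +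
      (-Real.pi * k.2 ^ 2 / Q.c + 2 * Real.pi * I * k.2 * (y + Q.b / (2 * Q.c) * (k.1 + x))) : ℂ) =
      (-(Real.pi * (-Q.discr / (4 * Q.c))) * (k.1 + x) ^ 2 + -(Real.pi / Q.c) * (k.2 + 0) ^ 2 : ℝ) +
        (2 * Real.pi * k.2 * (y + Q.b / (2 * Q.c) * (k.1 + x)) : ℝ) * I := by
    push_cast
    ring
  rw [partialDualTerm, hsplit, Complex.norm_exp, add_re, ofReal_re, re_ofReal_mul, I_re, mul_zero,
    add_zero (_ + _), Real.exp_add]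

lemma re_dualTerm (Q : BinaryForm) (x y : ℝ) (k : ℤ × ℤ) : (Q.dualTerm x y k).re =
    Real.exp (-Real.pi * Q.dual.eval k.1 k.2) *
      Real.cos (2 * Real.pi * (k.1 * x + k.2 * y)) := by
  rw [dualTerm, Complex.exp_re, add_re, add_im, ofReal_re, ofReal_im, re_ofReal_mul, im_ofReal_mul,
    I_re, I_im, mul_zero, add_zero, zero_add, mul_one]

lemma PosDef.summable_dualTerm (hQ : Q.PosDef) (x y : ℝ) : Summable (Q.dualTerm x y) := by
  rw [← summable_norm_iff]
  refine (hQ.dual.summable_theta Real.pi_pos).congr fun k => ?_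
  rw [dualTerm, Complex.norm_exp, add_re, ofReal_re, re_ofReal_mul, I_re, mul_zero, add_zero]

/-- Completing the square, `Q(x, y) = c (y + b x / (2 c))² - discr / (4 c) x²`. -/
lemma PosDef.tsum_exp_eq_tsum_partialDualTerm (hQ : Q.PosDef) (x y : ℝ) (m : ℤ) :
    ∑' n : ℤ, cexp (-Real.pi * Q.eval (m + x) (n + y) : ℝ) =
      ((√Q.c)⁻¹ : ℝ) * ∑' j : ℤ, Q.partialDualTerm x y (m, j) := by
  have hc : (Q.c : ℂ) ≠ 0 := by exact_mod_cast hQ.c_pos.ne'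
  have hpoisson := tsum_cexp_neg_pi_mul_add_sq hQ.c_pos (y + Q.b / (2 * Q.c) * (m + x)) 0
  calc ∑' n : ℤ, cexp (-Real.pi * Q.eval (m + x) (n + y) : ℝ)
      = cexp (-Real.pi * (-Q.discr / (4 * Q.c) : ℝ) * (m + x) ^ 2) * ∑' n : ℤ,
          cexp (-Real.pi * Q.c * (n + (y + Q.b / (2 * Q.c) * (m + x) : ℝ)) ^ 2 +
            2 * Real.pi * I * (0 : ℝ) * (n + (y + Q.b / (2 * Q.c) * (m + x) : ℝ))) := by
        rw [← tsum_mul_left]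
        refine tsum_congr fun n => ?_
        rw [← Complex.exp_add, eval, discr]
        congr 1
        push_cast
        field_simp
        ring
    _ = ((√Q.c)⁻¹ : ℝ) * ∑' j : ℤ, Q.partialDualTerm x y (m, j) := by
        rw [hpoisson, mul_left_comm, ← tsum_mul_left]
        refine congrArg _ (tsum_congr fun n => ?_)
        rw [partialDualTerm, ← Complex.exp_add]
        push_cast
        ring_nf

lemma PosDef.tsum_partialDualTerm (hQ : Q.PosDef) (x y : ℝ) (j : ℤ) :
    ∑' m : ℤ, Q.partialDualTerm x y (m, j) =
      ((√(-Q.discr / (4 * Q.c)))⁻¹ : ℝ) * ∑' l : ℤ, Q.dualTerm x y (l, j) := by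
  have hc := hQ.c_pos
  have hD := neg_pos.2 hQ.discr_neg
  have hcC : (Q.c : ℂ) ≠ 0 := by exact_mod_cast hc.ne'
  have hDC : (Q.discr : ℂ) ≠ 0 := by exact_mod_cast hQ.discr_neg.ne
  have hdiscr : (Q.b : ℂ) ^ 2 - 4 * Q.a * Q.c = Q.discr := by exact_mod_cast rfl
  have hpoisson := tsum_cexp_neg_pi_mul_add_sq (by positivity : 0 < -Q.discr / (4 * Q.c)) x
    (j * Q.b / (2 * Q.c))
  calc ∑' m : ℤ, Q.partialDualTerm x y (m, j)
      = cexp (-Real.pi * j ^ 2 / Q.c + 2 * Real.pi * I * j * y) * ∑' m : ℤ,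
          cexp (-Real.pi * (-Q.discr / (4 * Q.c) : ℝ) * (m + x) ^ 2 +
            2 * Real.pi * I * (j * Q.b / (2 * Q.c) : ℝ) * (m + x)) := by
        rw [← tsum_mul_left]
        refine tsum_congr fun n => ?_
        rw [partialDualTerm, ← Complex.exp_add]
        push_cast
        ring_nf
    _ = ((√(-Q.discr / (4 * Q.c)))⁻¹ : ℝ) * ∑' l : ℤ, Q.dualTerm x y (l, j) := by
        rw [hpoisson, mul_left_comm, ← tsum_mul_left]
        refine congrArg _ (tsum_congr fun n => ?_)
        rw [dualTerm, ← Complex.exp_add, BinaryForm.dual, eval_smul, eval]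
        congr 1
        push_cast
        field_simp
        linear_combination 4 * (j : ℂ) ^ 2 * hdiscr

lemma PosDef.shiftedTheta_pi (hQ : Q.PosDef) (x y : ℝ) :
    Q.shiftedTheta x y Real.pi = 2 / √(-Q.discr) * ∑' k : ℤ × ℤ,
      Real.exp (-Real.pi * Q.dual.eval k.1 k.2) *
        Real.cos (2 * Real.pi * (k.1 * x + k.2 * y)) := by
  have hc := hQ.c_pos
  have hconst : (√Q.c)⁻¹ * (√(-Q.discr / (4 * Q.c)))⁻¹ = 2 / √(-Q.discr) := by
    rw [← mul_inv, ← Real.sqrt_mul hc.le, show Q.c * (-Q.discr / (4 * Q.c)) = -Q.discr / 2 ^ 2 by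
      field_simp; norm_num, Real.sqrt_div' _ (by positivity), Real.sqrt_sq two_pos.le, inv_div]
  have hsum := Complex.ofRealCLM.summable (hQ.summable_shiftedTheta Real.pi_pos x y)
  have hcomplex : (Q.shiftedTheta x y Real.pi : ℂ) =
      ((2 / √(-Q.discr) : ℝ) : ℂ) * ∑' k, Q.dualTerm x y k := by
    calc (Q.shiftedTheta x y Real.pi : ℂ)
        = ∑' m : ℤ, ∑' n : ℤ, cexp (-Real.pi * Q.eval (m + x) (n + y) : ℝ) := by
          rw [shiftedTheta, Complex.ofReal_tsum]
          refine hsum.tsum_prod.trans ?_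
          simp only [ofRealCLM_apply, ofReal_exp]
      _ = ((√Q.c)⁻¹ : ℝ) * ∑' j : ℤ, ∑' m : ℤ, Q.partialDualTerm x y (m, j) := by
          simp only [hQ.tsum_exp_eq_tsum_partialDualTerm, tsum_mul_left]
          rw [Summable.tsum_comm (f := fun m j => Q.partialDualTerm x y (m, j))
            (hQ.summable_partialDualTerm x y)]
      _ = ((2 / √(-Q.discr) : ℝ) : ℂ) * ∑' k, Q.dualTerm x y k := by
          simp only [hQ.tsum_partialDualTerm, tsum_mul_left]
          rw [Summable.tsum_comm (f := fun l j => Q.dualTerm x y (l, j))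
            (hQ.summable_dualTerm x y), (hQ.summable_dualTerm x y).tsum_prod, ← mul_assoc,
            ← ofReal_mul, hconst]
  have hre := congrArg Complex.re hcomplex
  rw [ofReal_re, re_ofReal_mul, Complex.re_tsum (hQ.summable_dualTerm x y)] at hre
  simpa only [re_dualTerm] using hre

lemma PosDef.theta_pi (hQ : Q.PosDef) :
    Q.theta Real.pi = 2 / √(-Q.discr) * Q.dual.theta Real.pi := by
  simpa [shiftedTheta_zero, theta] using hQ.shiftedTheta_pi 0 0

lemma PosDef.theta_eq_mul_theta (hQ : Q.PosDef) (ht : 0 < t) :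
    Q.theta t = 2 * Real.pi / (√(-Q.discr) * t) *
      Q.theta (4 * Real.pi ^ 2 / (-Q.discr * t)) := by
  have hs : 0 < t / Real.pi := by positivity
  have hD := neg_pos.2 hQ.discr_neg
  have hdual := (hQ.smul hs).theta_pi
  rw [((t / Real.pi) • Q).smul_equivalent_dual.theta_eq, theta_smul, theta_smul, theta_smul,
    discr_smul, ← mul_neg, Real.sqrt_mul (by positivity), Real.sqrt_sq hs.le] at hdual
  convert hdual using 2
  · field_simp
  · field_simp
  · congr 1
    field_simp

end BinaryForm

/-! ### Montgomery's theorem and translations -/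

namespace BinaryForm

variable {Q : BinaryForm} {t : ℝ}

lemma PosDef.theta_hex_lt_of_le (hQ : Q.PosDef) (hdiscr : Q.discr = -3) (hne : ¬ Q.Equivalent hex)
    (ht : 18 / 5 ≤ t) : hex.theta t < Q.theta t := by
  obtain ⟨Q', hequiv, hred⟩ := hQ.exists_equivalent_isReduced
  rw [← hequiv.theta_eq]
  refine hred.theta_hex_lt (hequiv.posDef hQ) (hequiv.discr_eq.trans hdiscr) ?_ ht
  rintro rfl
  exact hne hequiv

/-- Montgomery's theorem. The functional equation exchanges `t` and `4 π² / (3 t)`, the larger of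
which exceeds `18 / 5`. -/
theorem PosDef.theta_hex_lt (hQ : Q.PosDef) (hdiscr : Q.discr = -3)
    (hne : ¬ Q.Equivalent hex) (ht : 0 < t) : hex.theta t < Q.theta t := by
  rcases le_or_gt (18 / 5) t with hlarge | hsmall
  · exact hQ.theta_hex_lt_of_le hdiscr hne hlarge
  · rw [posDef_hex.theta_eq_mul_theta ht, hQ.theta_eq_mul_theta ht, discr_hex, hdiscr]
    have hdual : 18 / 5 ≤ 4 * Real.pi ^ 2 / (-(-3) * t) := by
      rw [le_div_iff₀ (by linarith)]
      nlinarith [Real.pi_gt_d2]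
    have hlt := hQ.theta_hex_lt_of_le hdiscr hne hdual
    gcongr

/-- The cosine weights at the dual vectors `(1, 0)` and `(0, 1)` detect integrality. -/
lemma PosDef.shiftedTheta_pi_lt (hQ : Q.PosDef) {x y : ℝ}
    (hxy : ¬ ((∃ m : ℤ, (m : ℝ) = x) ∧ ∃ n : ℤ, (n : ℝ) = y)) :
    Q.shiftedTheta x y Real.pi < Q.theta Real.pi := by
  have hD := neg_pos.2 hQ.discr_neg
  have hsum := hQ.dual.summable_theta Real.pi_pos
  have hle (k : ℤ × ℤ) : Real.exp (-Real.pi * Q.dual.eval k.1 k.2) *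
      Real.cos (2 * Real.pi * (k.1 * x + k.2 * y)) ≤ Real.exp (-Real.pi * Q.dual.eval k.1 k.2) :=
    mul_le_of_le_one_right (Real.exp_pos _).le (Real.cos_le_one _)
  obtain ⟨k, hk⟩ : ∃ k : ℤ × ℤ, Real.cos (2 * Real.pi * (k.1 * x + k.2 * y)) ≠ 1 := by
    by_contra! hcos
    have hint (k : ℤ × ℤ) : ∃ n : ℤ, (n : ℝ) = k.1 * x + k.2 * y := by
      obtain ⟨n, hn⟩ := (Real.cos_eq_one_iff _).1 (hcos k)
      exact ⟨n, mul_left_cancel₀ Real.two_pi_pos.ne' (by rw [mul_comm, hn])⟩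
    exact hxy ⟨by simpa using hint (1, 0), by simpa using hint (0, 1)⟩
  have hsum_cos : Summable fun k : ℤ × ℤ => Real.exp (-Real.pi * Q.dual.eval k.1 k.2) *
      Real.cos (2 * Real.pi * (k.1 * x + k.2 * y)) := by
    refine hsum.of_norm_bounded fun k => ?_
    rw [norm_mul, Real.norm_of_nonneg (Real.exp_pos _).le]
    exact mul_le_of_le_one_right (Real.exp_pos _).le (Real.abs_cos_le_one _)
  rw [hQ.shiftedTheta_pi, hQ.theta_pi, theta]
  exact mul_lt_mul_of_pos_left (hsum_cos.tsum_lt_tsum hle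
    (mul_lt_of_lt_one_right (Real.exp_pos _) ((Real.cos_le_one _).lt_of_ne hk)) hsum)
    (by positivity)

lemma PosDef.shiftedTheta_lt_theta (hQ : Q.PosDef) (ht : 0 < t) {x y : ℝ}
    (hxy : ¬ ((∃ m : ℤ, (m : ℝ) = x) ∧ ∃ n : ℤ, (n : ℝ) = y)) :
    Q.shiftedTheta x y t < Q.theta t := by
  have hlt := (hQ.smul (div_pos ht Real.pi_pos)).shiftedTheta_pi_lt hxy
  rwa [shiftedTheta_smul, theta_smul, div_mul_cancel₀ _ Real.pi_ne_zero] at hlt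

end BinaryForm

/-! ### Lattices -/

section Lattice

open Matrix

variable {n : Type*} [Fintype n]

/-- The lattice `M ℤⁿ`, as a set of points. -/
def latticePoints (M : Matrix n n ℝ) : Set (n → ℝ) :=
  {v | ∃ k : n → ℤ, v = M *ᵥ fun j => (k j : ℝ)}

lemma intCast_comp_mulVec (P : Matrix n n ℤ) (k : n → ℤ) :
    (fun i => ((P *ᵥ k) i : ℝ)) = P.map (↑) *ᵥ fun j => (k j : ℝ) :=
  funext fun i => (Int.castRingHom ℝ).map_mulVec P k i

variable [DecidableEq n]

lemma latticePoints_mul_map_intCast (M : Matrix n n ℝ) {P : Matrix n n ℤ} (hP : IsUnit P.det) :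
    latticePoints (M * P.map (↑)) = latticePoints M := by
  ext v
  constructor
  · rintro ⟨k, rfl⟩
    exact ⟨P *ᵥ k, by rw [intCast_comp_mulVec, mulVec_mulVec]⟩
  · rintro ⟨k, rfl⟩
    refine ⟨P⁻¹ *ᵥ k, ?_⟩
    rw [← mulVec_mulVec, ← intCast_comp_mulVec, mulVec_mulVec, mul_nonsing_inv P hP, one_mulVec]

/-- The lattice generated by `M` is the image under a rotation of the one generated by `N`. -/
def IsRotated (M N : Matrix n n ℝ) : Prop :=
  ∃ R : Matrix n n ℝ, Rᵀ * R = 1 ∧ R.det = 1 ∧ latticePoints M = latticePoints (R * N)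

lemma exists_orthogonal_of_transpose_mul_self_eq {M N : Matrix n n ℝ} (hN : N.det ≠ 0)
    (h : Mᵀ * M = Nᵀ * N) : ∃ R : Matrix n n ℝ, Rᵀ * R = 1 ∧ M = R * N := by
  have hunit : IsUnit N.det := isUnit_iff_ne_zero.2 hN
  refine ⟨M * N⁻¹, ?_, by rw [mul_assoc, nonsing_inv_mul N hunit, mul_one]⟩
  rw [transpose_mul, mul_assoc, ← mul_assoc Mᵀ, h, mul_assoc, mul_nonsing_inv N hunit, mul_one,
    ← transpose_mul, mul_nonsing_inv N hunit, transpose_one]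

end Lattice

section LatTheta

open Matrix

variable {d : ℕ} {M N : Matrix (Fin d) (Fin d) ℝ}

lemma latTheta_of_mem_latticePoints {u : Fin d → ℝ} (hu : u ∈ latticePoints M) (α : ℝ) :
    latTheta d M u α = latTheta d M 0 α := by
  obtain ⟨k, rfl⟩ := hu
  refine (tsum_congr fun l => ?_).trans ((Equiv.addRight k).tsum_eq _)
  have hadd : (fun j => (Equiv.addRight k l j : ℝ)) =
      (fun j => (l j : ℝ)) + fun j => (k j : ℝ) := by
    ext j
    simp
  simp only [hadd, mulVec_add, Pi.add_apply, Pi.zero_apply, add_zero]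

lemma latTheta_zero_eq_tsum_latticePoints (hM : M.det ≠ 0) (α : ℝ) :
    latTheta d M 0 α =
      ∑' v : latticePoints M, Real.exp (-Real.pi * α * ∑ i, (v : Fin d → ℝ) i ^ 2) := by
  have hinj : Function.Injective fun k : Fin d → ℤ => M *ᵥ fun j => (k j : ℝ) := fun k l h =>
    funext fun j => by exact_mod_cast congrFun (mulVec_injective_of_det_ne_zero hM h) j
  have hrange : latticePoints M = Set.range fun k : Fin d → ℤ => M *ᵥ fun j => (k j : ℝ) := by
    ext v
    simp [latticePoints, eq_comm]
  rw [hrange, tsum_range (fun v : Fin d → ℝ => Real.exp (-Real.pi * α * ∑ i, v i ^ 2)) hinj]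
  simp only [latTheta, Pi.zero_apply, add_zero]

lemma latTheta_zero_eq_of_latticePoints_eq (hM : M.det ≠ 0) (hN : N.det ≠ 0)
    (h : latticePoints M = latticePoints N) (α : ℝ) : latTheta d M 0 α = latTheta d N 0 α := by
  rw [latTheta_zero_eq_tsum_latticePoints hM, latTheta_zero_eq_tsum_latticePoints hN, h]

lemma sum_sq_mulVec_of_orthogonal {n : Type*} [Fintype n] [DecidableEq n] {R : Matrix n n ℝ}
    (hR : Rᵀ * R = 1) (v : n → ℝ) : ∑ i, (R *ᵥ v) i ^ 2 = ∑ i, v i ^ 2 := by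
  simp only [sq]
  change R *ᵥ v ⬝ᵥ R *ᵥ v = v ⬝ᵥ v
  rw [dotProduct_mulVec, ← mulVec_transpose, mulVec_mulVec, hR, one_mulVec]

lemma latTheta_orthogonal_mul {R : Matrix (Fin d) (Fin d) ℝ} (hR : Rᵀ * R = 1)
    (N : Matrix (Fin d) (Fin d) ℝ) (u : Fin d → ℝ) (α : ℝ) :
    latTheta d (R * N) (R *ᵥ u) α = latTheta d N u α := by
  refine tsum_congr fun k => ?_
  simp only [← Pi.add_apply, ← mulVec_mulVec, ← mulVec_add, sum_sq_mulVec_of_orthogonal hR]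

lemma IsRotated.latTheta_zero_eq (h : IsRotated M N) (hM : M.det ≠ 0) (hN : N.det ≠ 0) (α : ℝ) :
    latTheta d M 0 α = latTheta d N 0 α := by
  obtain ⟨R, hR, hRdet, hset⟩ := h
  rw [latTheta_zero_eq_of_latticePoints_eq hM (by rwa [det_mul, hRdet, one_mul]) hset]
  simpa using latTheta_orthogonal_mul hR N 0 α

end LatTheta

/-! ### Planar lattices and their Gram forms -/

section Planar

open Matrix BinaryForm

variable {M N : Matrix (Fin 2) (Fin 2) ℝ} {u : Fin 2 → ℝ} {α : ℝ}

/-- The Gram form `v ↦ |M v|²` of a basis of a planar lattice, the columns of `M`. -/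
def gramForm (M : Matrix (Fin 2) (Fin 2) ℝ) : BinaryForm :=
  BinaryForm.comp ⟨1, 0, 1⟩ M

lemma gramForm_mul (M P : Matrix (Fin 2) (Fin 2) ℝ) :
    gramForm (M * P) = (gramForm M).comp P :=
  (comp_comp ⟨1, 0, 1⟩ M P).symm

lemma discr_gramForm (M : Matrix (Fin 2) (Fin 2) ℝ) : (gramForm M).discr = -4 * M.det ^ 2 := by
  rw [gramForm, discr_comp, BinaryForm.discr]
  ring

lemma posDef_gramForm (hM : M.det ≠ 0) : (gramForm M).PosDef :=
  PosDef.comp ⟨one_pos, by norm_num [BinaryForm.discr]⟩ hM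

lemma gramForm_A2mat : gramForm A2mat = hex := by
  have hsqrt : √3 ^ 2 = 3 := Real.sq_sqrt (by norm_num)
  simp only [gramForm, BinaryForm.comp, eval, A2mat, hex]
  ext <;> simp [div_pow, hsqrt]
  norm_num

lemma det_A2mat_ne_zero : A2mat.det ≠ 0 := by
  simp [A2mat]

lemma transpose_mul_self_eq (M : Matrix (Fin 2) (Fin 2) ℝ) : Mᵀ * M =
    !![(gramForm M).a, (gramForm M).b / 2; (gramForm M).b / 2, (gramForm M).c] := by
  ext i j
  fin_cases i <;> fin_cases j <;>
    simp [gramForm, BinaryForm.comp, eval, mul_apply, Fin.sum_univ_two] <;> ring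

lemma latTheta_mulVec (M : Matrix (Fin 2) (Fin 2) ℝ) (v : Fin 2 → ℝ) (α : ℝ) :
    latTheta 2 M (M *ᵥ v) α = (gramForm M).shiftedTheta (v 0) (v 1) (Real.pi * α) := by
  rw [latTheta, ← (finTwoArrowEquiv ℤ).symm.tsum_eq]
  refine tsum_congr fun k => ?_
  rw [gramForm, eval_comp, eval, Fin.sum_univ_two, ← Pi.add_apply, ← Pi.add_apply, ← mulVec_add]
  simp only [mulVec_fin_two, finTwoArrowEquiv_symm_apply, Pi.add_apply, cons_val]
  ring_nf

lemma latTheta_zero_eq_theta_gramForm (M : Matrix (Fin 2) (Fin 2) ℝ) (α : ℝ) :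
    latTheta 2 M 0 α = (gramForm M).theta (Real.pi * α) := by
  simpa [shiftedTheta_zero] using latTheta_mulVec M 0 α

lemma latTheta_lt_latTheta_zero (hM : M.det ≠ 0) (hu : u ∉ latticePoints M) (hα : 0 < α) :
    latTheta 2 M u α < latTheta 2 M 0 α := by
  have hunit : IsUnit M := M.isUnit_iff_isUnit_det.2 hM.isUnit
  obtain ⟨v, rfl⟩ := mulVec_surjective_iff_isUnit.2 hunit u
  rw [latTheta_mulVec, latTheta_zero_eq_theta_gramForm]
  refine (posDef_gramForm hM).shiftedTheta_lt_theta (mul_pos Real.pi_pos hα) ?_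
  rintro ⟨⟨k, hk⟩, l, hl⟩
  refine hu ⟨![k, l], congrArg _ ?_⟩
  ext j
  fin_cases j <;> simp [hk, hl]

lemma latTheta_le_latTheta_zero (hM : M.det ≠ 0) (u : Fin 2 → ℝ) (hα : 0 < α) :
    latTheta 2 M u α ≤ latTheta 2 M 0 α := by
  by_cases hu : u ∈ latticePoints M
  · exact (latTheta_of_mem_latticePoints hu α).le
  · exact (latTheta_lt_latTheta_zero hM hu hα).le

lemma latTheta_eq_latTheta_zero_iff (hM : M.det ≠ 0) (hα : 0 < α) :
    latTheta 2 M u α = latTheta 2 M 0 α ↔ u ∈ latticePoints M :=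
  ⟨fun heq => by_contra fun hu => (latTheta_lt_latTheta_zero hM hu hα).ne heq,
    fun hu => latTheta_of_mem_latticePoints hu α⟩

lemma exists_orthogonal_of_gramForm_equivalent (hN : N.det ≠ 0)
    (h : (gramForm M).Equivalent (gramForm N)) :
    ∃ R : Matrix (Fin 2) (Fin 2) ℝ, Rᵀ * R = 1 ∧ latticePoints M = latticePoints (R * N) := by
  obtain ⟨P, hP, hgram⟩ := h
  rw [← gramForm_mul] at hgram
  obtain ⟨R, hR, hmul⟩ := exists_orthogonal_of_transpose_mul_self_eq
    (M := M * P.map (↑)) hN (by rw [transpose_mul_self_eq, transpose_mul_self_eq N, hgram])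
  exact ⟨R, hR, by rw [← hmul, latticePoints_mul_map_intCast M hP]⟩

/-- The triangular lattice is symmetric under the reflection `(x, y) ↦ (x, -y)`, so an orthogonal
map onto its image can be taken to preserve orientation. -/
lemma isRotated_of_gramForm_equivalent_hex (h : (gramForm M).Equivalent hex) :
    IsRotated M A2mat := by
  obtain ⟨R, hR, hset⟩ := exists_orthogonal_of_gramForm_equivalent det_A2mat_ne_zero
    (gramForm_A2mat.symm ▸ h)
  have hdet : R.det = 1 ∨ R.det = -1 := by
    rw [← sq_eq_one_iff, sq]
    simpa using congrArg det hR
  rcases hdet with hdet | hdet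
  · exact ⟨R, hR, hdet, hset⟩
  · let S : Matrix (Fin 2) (Fin 2) ℝ := !![1, 0; 0, -1]
    have hreflection :
        S * A2mat = A2mat * (!![1, 1; 0, -1] : Matrix (Fin 2) (Fin 2) ℤ).map (↑) := by
      ext i j
      fin_cases i <;> fin_cases j <;> simp [S, A2mat, mul_apply, Fin.sum_univ_two]
      norm_num
    refine ⟨R * S, ?_, by simp [S, hdet], ?_⟩
    · rw [transpose_mul, mul_assoc, ← mul_assoc Rᵀ, hR, one_mul]
      ext i j
      fin_cases i <;> fin_cases j <;> simp [S, mul_apply, Fin.sum_univ_two]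
    · rw [hset, mul_assoc, hreflection, ← mul_assoc, latticePoints_mul_map_intCast]
      simp

lemma det_ne_zero_of_abs_det_eq (hM : |M.det| = √3 / 2) : M.det ≠ 0 :=
  abs_pos.1 (hM ▸ by positivity)

lemma latTheta_A2mat_lt (hM : |M.det| = √3 / 2) (hrot : ¬ IsRotated M A2mat)
    (hα : 0 < α) : latTheta 2 A2mat 0 α < latTheta 2 M 0 α := by
  have hdiscr : (gramForm M).discr = -3 := by
    rw [discr_gramForm, ← sq_abs, hM, div_pow, Real.sq_sqrt zero_le_three]
    norm_num
  rw [latTheta_zero_eq_theta_gramForm, latTheta_zero_eq_theta_gramForm, gramForm_A2mat]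
  exact (posDef_gramForm (det_ne_zero_of_abs_det_eq hM)).theta_hex_lt hdiscr
    (mt isRotated_of_gramForm_equivalent_hex hrot) (mul_pos Real.pi_pos hα)

lemma latTheta_A2mat_le (hM : |M.det| = √3 / 2) (hα : 0 < α) :
    latTheta 2 A2mat 0 α ≤ latTheta 2 M 0 α := by
  by_cases hrot : IsRotated M A2mat
  · exact (hrot.latTheta_zero_eq (det_ne_zero_of_abs_det_eq hM) det_A2mat_ne_zero α).ge
  · exact (latTheta_A2mat_lt hM hrot hα).le

lemma latTheta_A2mat_eq_iff (hM : |M.det| = √3 / 2) (hα : 0 < α) :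
    latTheta 2 A2mat 0 α = latTheta 2 M 0 α ↔ IsRotated M A2mat :=
  ⟨fun heq => by_contra fun hrot => (latTheta_A2mat_lt hM hrot hα).ne heq,
    fun hrot => (hrot.latTheta_zero_eq (det_ne_zero_of_abs_det_eq hM) det_A2mat_ne_zero α).symm⟩

end Planar

/-- for every Bravais lattice `Λ = Mℤ²` with the same covolume `√3/2` as `A₂`,
every `u ∈ ℝ²` and every `α > 0`, `θ_{A₂+u}(α) ≤ θ_Λ(α)`, with equality iff `u ∈ A₂` and
`Λ = R·A₂` for a rotation `R ∈ SO(2)`. -/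
theorem a2_translated_minimal
    (M : Matrix (Fin 2) (Fin 2) ℝ) (hM : |M.det| = Real.sqrt 3 / 2)
    (u : Fin 2 → ℝ) (α : ℝ) (hα : 0 < α) :
    latTheta 2 A2mat u α ≤ latTheta 2 M 0 α ∧
    (latTheta 2 A2mat u α = latTheta 2 M 0 α ↔
      ((∃ k : Fin 2 → ℤ, u = A2mat.mulVec (fun j => (k j : ℝ))) ∧
        ∃ R : Matrix (Fin 2) (Fin 2) ℝ, R.transpose * R = 1 ∧ R.det = 1 ∧
          {v : Fin 2 → ℝ | ∃ k : Fin 2 → ℤ, v = M.mulVec (fun j => (k j : ℝ))}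
            = {v : Fin 2 → ℝ | ∃ k : Fin 2 → ℤ,
                v = (R * A2mat).mulVec (fun j => (k j : ℝ))})) := by
  have hdetA := det_A2mat_ne_zero
  have htranslate := latTheta_le_latTheta_zero hdetA u hα
  have hminimal := latTheta_A2mat_le hM hα
  refine ⟨htranslate.trans hminimal, fun heq => ⟨?_, ?_⟩, fun ⟨hu, hrot⟩ => ?_⟩
  · exact (latTheta_eq_latTheta_zero_iff hdetA hα).1 (htranslate.antisymm (heq ▸ hminimal))
  · exact (latTheta_A2mat_eq_iff hM hα).1 (hminimal.antisymm (heq ▸ htranslate))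
  · exact ((latTheta_eq_latTheta_zero_iff hdetA hα).2 hu).trans
      ((latTheta_A2mat_eq_iff hM hα).2 hrot)
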